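/- Let 1 < p < Q, let a, b ∈ ℝ, set λ = a + b, and assume Q ≠ 1 + λ. Then for every smooth compactly supported function f on ℍⁿ \ {0} one has |(Q − 1 − λ)/p| · ∫_{ℍⁿ} (|z|^p/d^p) · (|f|^p/d^{λ+1}) dξ ≤ (∫_{ℍⁿ} |∇_H f|^p / d^{ap} dξ)^{1/p} · (∫_{ℍⁿ} (|z|^p/d^p) · (|f|^p/d^{bq}) dξ)^{1/q}, where 1/p + 1/q = 1. -/

import Mathlib

open MeasureTheory Real

noncomputable section

/-- The underlying space of the Heisenberg group `ℍⁿ = ℝⁿ × ℝⁿ × ℝ`,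
with points `ξ = (x, y, t)` and `z = (x, y)`. -/
abbrev Heis (n : ℕ) : Type := (Fin n → ℝ) × (Fin n → ℝ) × ℝ

/-- The left-invariant horizontal vector field `X_j = ∂/∂x_j + 2 y_j ∂/∂t`. -/
noncomputable def XH {n : ℕ} (j : Fin n) (f : Heis n → ℝ) (ξ : Heis n) : ℝ :=
  fderiv ℝ f ξ (Pi.single j 1, 0, 0) + 2 * ξ.2.1 j * fderiv ℝ f ξ (0, 0, 1)

/-- The left-invariant horizontal vector field `Y_j = ∂/∂y_j − 2 x_j ∂/∂t`. -/
noncomputable def YH {n : ℕ} (j : Fin n) (f : Heis n → ℝ) (ξ : Heis n) : ℝ :=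
  fderiv ℝ f ξ (0, Pi.single j 1, 0) - 2 * ξ.1 j * fderiv ℝ f ξ (0, 0, 1)

/-- The horizontal gradient `∇_H f = (X_1 f, …, X_n f, Y_1 f, …, Y_n f)`. -/
noncomputable def hGrad {n : ℕ} (f : Heis n → ℝ) (ξ : Heis n) : (Fin n → ℝ) × (Fin n → ℝ) :=
  (fun j => XH j f ξ, fun j => YH j f ξ)

/-- Euclidean length of a horizontal vector. -/
noncomputable def hNorm {n : ℕ} (v : (Fin n → ℝ) × (Fin n → ℝ)) : ℝ :=
  Real.sqrt (∑ j, v.1 j ^ 2 + ∑ j, v.2 j ^ 2)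

/-- Euclidean inner product of horizontal vectors. -/
noncomputable def hDot {n : ℕ} (v w : (Fin n → ℝ) × (Fin n → ℝ)) : ℝ :=
  ∑ j, v.1 j * w.1 j + ∑ j, v.2 j * w.2 j

/-- The horizontal divergence `div_H w = Σ_j (X_j w_j + Y_j w_{n+j})`. -/
noncomputable def hDiv {n : ℕ} (V : Heis n → (Fin n → ℝ) × (Fin n → ℝ)) (ξ : Heis n) : ℝ :=
  ∑ j, (XH j (fun η => (V η).1 j) ξ + YH j (fun η => (V η).2 j) ξ)

/-- The sub-Laplacian `Δ_H = Σ_j (X_j² + Y_j²) = div_H ∘ ∇_H`. -/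
noncomputable def hLap {n : ℕ} (f : Heis n → ℝ) : Heis n → ℝ :=
  hDiv (hGrad f)

/-- The `p`-sub-Laplacian `Δ_{H,p} f = div_H (|∇_H f|^{p−2} ∇_H f)`. -/
noncomputable def pLap {n : ℕ} (p : ℝ) (f : Heis n → ℝ) : Heis n → ℝ :=
  hDiv (fun ξ => hNorm (hGrad f ξ) ^ (p - 2) • hGrad f ξ)

/-- The Euclidean norm `|z|` of the horizontal component `z = (x, y)`. -/
noncomputable def zNorm {n : ℕ} (ξ : Heis n) : ℝ :=
  Real.sqrt (∑ j, ξ.1 j ^ 2 + ∑ j, ξ.2.1 j ^ 2)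

/-- The Heisenberg gauge `d(z, t) = (|z|⁴ + t²)^{1/4}`. -/
noncomputable def dH {n : ℕ} (ξ : Heis n) : ℝ :=
  ((∑ j, ξ.1 j ^ 2 + ∑ j, ξ.2.1 j ^ 2) ^ 2 + ξ.2.2 ^ 2) ^ (1 / 4 : ℝ)

/-- A smooth compactly supported function on `ℍⁿ \ {0}`. -/
def IsTestAwayZero {n : ℕ} (f : Heis n → ℝ) : Prop :=
  ContDiff ℝ (⊤ : ℕ∞) f ∧ HasCompactSupport f ∧ (0 : Heis n) ∉ tsupport f

/-!
The horizontal field `d³ ∇_H d` is polynomial, with length `|z| d²` and divergence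
`(2n + 4) |z|²`, so the divergence of `|z|^(p-2) d^δ · d³ ∇_H d` is `(Q + p + δ) |z|^p d^δ`.
Taking `δ = -(p + λ + 1)` makes the constant `Q - 1 - λ`; integrating by parts against `|f|^p` and
bounding the remaining inner product by Cauchy–Schwarz leaves
`p ∫ |∇_H f| d^(-a) · (|z|/d)^(p-1) |f|^(p-1) d^(-b)`, to which Hölder's inequality applies.
The field need not be differentiable where `z = 0`, so one first integrates by parts with `|z|²`
replaced by `|z|² + ε` and then lets `ε → 0` by dominated convergence.
-/

open Filter Topology

variable {n : ℕ}

section HorizontalCalculus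

/-- The coordinate `x_j` as a continuous linear functional. -/
def xCoord (j : Fin n) : Heis n →L[ℝ] ℝ :=
  ContinuousLinearMap.proj j ∘L ContinuousLinearMap.fst ℝ _ _

/-- The coordinate `y_j` as a continuous linear functional. -/
def yCoord (j : Fin n) : Heis n →L[ℝ] ℝ :=
  ContinuousLinearMap.proj j ∘L ContinuousLinearMap.fst ℝ _ _ ∘L ContinuousLinearMap.snd ℝ _ _

@[simp] lemma xCoord_apply (j : Fin n) (ξ : Heis n) : xCoord j ξ = ξ.1 j := rfl

@[simp] lemma yCoord_apply (j : Fin n) (ξ : Heis n) : yCoord j ξ = ξ.2.1 j := rfl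

lemma hasFDerivAt_fst_apply (j : Fin n) (ξ : Heis n) :
    HasFDerivAt (fun η : Heis n => η.1 j) (xCoord j) ξ :=
  (xCoord j).hasFDerivAt

lemma hasFDerivAt_snd_fst_apply (j : Fin n) (ξ : Heis n) :
    HasFDerivAt (fun η : Heis n => η.2.1 j) (yCoord j) ξ :=
  (yCoord j).hasFDerivAt

lemma hNorm_nonneg (v : (Fin n → ℝ) × (Fin n → ℝ)) : 0 ≤ hNorm v := Real.sqrt_nonneg _

lemma hNorm_zero : hNorm (0 : (Fin n → ℝ) × (Fin n → ℝ)) = 0 := by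
  simp [hNorm]

lemma abs_hDot_le (v w : (Fin n → ℝ) × (Fin n → ℝ)) : |hDot v w| ≤ hNorm v * hNorm w := by
  have h := Finset.sum_mul_sq_le_sq_mul_sq Finset.univ (Sum.elim v.1 v.2) (Sum.elim w.1 w.2)
  simp only [Fintype.sum_sum_type, Sum.elim_inl, Sum.elim_inr] at h
  rw [hNorm, hNorm, ← Real.sqrt_mul (by positivity)]
  exact Real.abs_le_sqrt h

lemma hDot_zero_left (w : (Fin n → ℝ) × (Fin n → ℝ)) : hDot 0 w = 0 := by
  simp [hDot]

lemma hDot_add_left (v v' w : (Fin n → ℝ) × (Fin n → ℝ)) :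
    hDot (v + v') w = hDot v w + hDot v' w := by
  simp only [hDot, Prod.fst_add, Prod.snd_add, Pi.add_apply, add_mul, Finset.sum_add_distrib]
  ring

lemma hDot_comm (v w : (Fin n → ℝ) × (Fin n → ℝ)) : hDot v w = hDot w v := by
  simp only [hDot, mul_comm]

lemma hDot_smul_left (c : ℝ) (v w : (Fin n → ℝ) × (Fin n → ℝ)) :
    hDot (c • v) w = c * hDot v w := by
  simp [hDot, mul_add, Finset.mul_sum, mul_assoc]

lemma hDot_add_right (v w w' : (Fin n → ℝ) × (Fin n → ℝ)) :
    hDot v (w + w') = hDot v w + hDot v w' := by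
  simp only [hDot_comm v, hDot_add_left]

lemma hDot_smul_right (c : ℝ) (v w : (Fin n → ℝ) × (Fin n → ℝ)) :
    hDot v (c • w) = c * hDot v w := by
  simp only [hDot_comm v, hDot_smul_left]

lemma hNorm_eq_sqrt_hDot (v : (Fin n → ℝ) × (Fin n → ℝ)) : hNorm v = √(hDot v v) := by
  simp only [hNorm, hDot, sq]

lemma hNorm_smul (c : ℝ) (v : (Fin n → ℝ) × (Fin n → ℝ)) : hNorm (c • v) = |c| * hNorm v := by
  simp only [hNorm, Prod.smul_fst, Prod.smul_snd, Pi.smul_apply, smul_eq_mul, mul_pow,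
    ← Finset.mul_sum, ← mul_add]
  rw [Real.sqrt_mul (sq_nonneg c), Real.sqrt_sq_eq_abs]

lemma hasCompactSupport_fst_apply {X : Type*} [TopologicalSpace X]
    {V : X → (Fin n → ℝ) × (Fin n → ℝ)} (hV : HasCompactSupport V) (j : Fin n) :
    HasCompactSupport fun ξ => (V ξ).1 j :=
  hV.comp_left (g := fun v : (Fin n → ℝ) × (Fin n → ℝ) => v.1 j) rfl

lemma hasCompactSupport_snd_apply {X : Type*} [TopologicalSpace X]
    {V : X → (Fin n → ℝ) × (Fin n → ℝ)} (hV : HasCompactSupport V) (j : Fin n) :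
    HasCompactSupport fun ξ => (V ξ).2 j :=
  hV.comp_left (g := fun v : (Fin n → ℝ) × (Fin n → ℝ) => v.2 j) rfl

lemma XH_eq_fderiv (j : Fin n) (f : Heis n → ℝ) (ξ : Heis n) :
    XH j f ξ = fderiv ℝ f ξ (Pi.single j 1, 0, 2 * ξ.2.1 j) := by
  rw [XH, ← smul_eq_mul, ← map_smul, ← map_add]
  simp

lemma YH_eq_fderiv (j : Fin n) (f : Heis n → ℝ) (ξ : Heis n) :
    YH j f ξ = fderiv ℝ f ξ (0, Pi.single j 1, -(2 * ξ.1 j)) := by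
  rw [YH, ← smul_eq_mul, ← map_smul, ← map_sub]
  simp

lemma hGrad_eq_of_hasFDerivAt {f : Heis n → ℝ} {f' : Heis n →L[ℝ] ℝ} {ξ : Heis n}
    (hf : HasFDerivAt f f' ξ) :
    hGrad f ξ = (fun j => f' (Pi.single j 1, 0, 2 * ξ.2.1 j),
      fun j => f' (0, Pi.single j 1, -(2 * ξ.1 j))) := by
  simp only [hGrad, XH_eq_fderiv, YH_eq_fderiv, hf.fderiv]

lemma hGrad_add {f g : Heis n → ℝ} {ξ : Heis n} (hf : DifferentiableAt ℝ f ξ)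
    (hg : DifferentiableAt ℝ g ξ) :
    hGrad (fun η => f η + g η) ξ = hGrad f ξ + hGrad g ξ := by
  rw [hGrad_eq_of_hasFDerivAt (hf.hasFDerivAt.fun_add hg.hasFDerivAt),
    hGrad_eq_of_hasFDerivAt hf.hasFDerivAt, hGrad_eq_of_hasFDerivAt hg.hasFDerivAt]
  rfl

lemma hGrad_mul {f g : Heis n → ℝ} {ξ : Heis n} (hf : DifferentiableAt ℝ f ξ)
    (hg : DifferentiableAt ℝ g ξ) :
    hGrad (fun η => f η * g η) ξ = f ξ • hGrad g ξ + g ξ • hGrad f ξ := by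
  rw [hGrad_eq_of_hasFDerivAt (hf.hasFDerivAt.fun_mul hg.hasFDerivAt),
    hGrad_eq_of_hasFDerivAt hf.hasFDerivAt, hGrad_eq_of_hasFDerivAt hg.hasFDerivAt]
  rfl

lemma hGrad_comp {φ : ℝ → ℝ} {φ' : ℝ} {g : Heis n → ℝ} {ξ : Heis n}
    (hφ : HasDerivAt φ φ' (g ξ)) (hg : DifferentiableAt ℝ g ξ) :
    hGrad (fun η => φ (g η)) ξ = φ' • hGrad g ξ := by
  rw [hGrad_eq_of_hasFDerivAt (f := fun η => φ (g η)) (hφ.comp_hasFDerivAt ξ hg.hasFDerivAt),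
    hGrad_eq_of_hasFDerivAt hg.hasFDerivAt]
  rfl

lemma hDiv_add {V W : Heis n → (Fin n → ℝ) × (Fin n → ℝ)} {ξ : Heis n}
    (hV : DifferentiableAt ℝ V ξ) (hW : DifferentiableAt ℝ W ξ) :
    hDiv (fun η => V η + W η) ξ = hDiv V ξ + hDiv W ξ := by
  have hV₁ (j : Fin n) : DifferentiableAt ℝ (fun η => (V η).1 j) ξ := by fun_prop
  have hV₂ (j : Fin n) : DifferentiableAt ℝ (fun η => (V η).2 j) ξ := by fun_prop
  have hW₁ (j : Fin n) : DifferentiableAt ℝ (fun η => (W η).1 j) ξ := by fun_prop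
  have hW₂ (j : Fin n) : DifferentiableAt ℝ (fun η => (W η).2 j) ξ := by fun_prop
  simp only [hDiv, XH_eq_fderiv, YH_eq_fderiv, Prod.fst_add, Prod.snd_add, Pi.add_apply,
    fderiv_fun_add (hV₁ _) (hW₁ _), fderiv_fun_add (hV₂ _) (hW₂ _), add_apply,
    ← Finset.sum_add_distrib]
  exact Finset.sum_congr rfl fun j _ => by ring

lemma hDiv_smul {g : Heis n → ℝ} {V : Heis n → (Fin n → ℝ) × (Fin n → ℝ)} {ξ : Heis n}
    (hg : DifferentiableAt ℝ g ξ) (hV : DifferentiableAt ℝ V ξ) :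
    hDiv (fun η => g η • V η) ξ = g ξ * hDiv V ξ + hDot (hGrad g ξ) (V ξ) := by
  have hV₁ (j : Fin n) : DifferentiableAt ℝ (fun η => (V η).1 j) ξ := by fun_prop
  have hV₂ (j : Fin n) : DifferentiableAt ℝ (fun η => (V η).2 j) ξ := by fun_prop
  simp only [hDiv, hDot, hGrad, XH_eq_fderiv, YH_eq_fderiv, Prod.smul_fst, Prod.smul_snd,
    Pi.smul_apply, smul_eq_mul, fderiv_fun_mul hg (hV₁ _), fderiv_fun_mul hg (hV₂ _), add_apply,
    smul_apply, Finset.mul_sum, ← Finset.sum_add_distrib]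
  exact Finset.sum_congr rfl fun j _ => by ring

lemma tsupport_hGrad_subset (f : Heis n → ℝ) : tsupport (hGrad f) ⊆ tsupport f := by
  refine (closure_mono fun ξ hξ => ?_).trans (tsupport_fderiv_subset ℝ)
  contrapose! hξ
  rw [Function.notMem_support] at hξ ⊢
  ext <;> simp [hGrad, XH, YH, hξ]

lemma hasCompactSupport_hGrad {f : Heis n → ℝ} (hf : HasCompactSupport f) :
    HasCompactSupport (hGrad f) :=
  hf.of_isClosed_subset (isClosed_tsupport _) (tsupport_hGrad_subset f)

lemma continuous_hGrad {f : Heis n → ℝ} (hf : ContDiff ℝ 1 f) : Continuous (hGrad f) := by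
  have := hf.continuous_fderiv one_ne_zero
  unfold hGrad XH YH
  fun_prop

lemma hDiv_eq_zero_of_notMem_tsupport {V : Heis n → (Fin n → ℝ) × (Fin n → ℝ)} {ξ : Heis n}
    (hξ : ξ ∉ tsupport V) : hDiv V ξ = 0 := by
  have h₁ (j : Fin n) : fderiv ℝ (fun η => (V η).1 j) ξ = 0 :=
    fderiv_of_notMem_tsupport ℝ
      (mt (tsupport_comp_subset (g := fun v : (Fin n → ℝ) × (Fin n → ℝ) => v.1 j) rfl V ·) hξ)
  have h₂ (j : Fin n) : fderiv ℝ (fun η => (V η).2 j) ξ = 0 :=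
    fderiv_of_notMem_tsupport ℝ
      (mt (tsupport_comp_subset (g := fun v : (Fin n → ℝ) × (Fin n → ℝ) => v.2 j) rfl V ·) hξ)
  simp [hDiv, XH, YH, h₁, h₂]

lemma continuous_hNorm : Continuous (hNorm (n := n)) := by
  unfold hNorm
  fun_prop

lemma tsupport_hNorm_hGrad_subset (f : Heis n → ℝ) :
    tsupport (fun ξ => hNorm (hGrad f ξ)) ⊆ tsupport f :=
  (tsupport_comp_subset hNorm_zero (hGrad f)).trans (tsupport_hGrad_subset f)

lemma hasCompactSupport_hNorm_hGrad {f : Heis n → ℝ} (hf : HasCompactSupport f) :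
    HasCompactSupport fun ξ => hNorm (hGrad f ξ) :=
  (hasCompactSupport_hGrad hf).comp_left hNorm_zero

lemma support_hDot_subset (U V : Heis n → (Fin n → ℝ) × (Fin n → ℝ)) :
    (fun ξ => hDot (U ξ) (V ξ)).support ⊆ U.support := by
  intro ξ hξ hU
  exact hξ (by simp [hU, hDot_zero_left])

lemma continuous_hDot_of_tsupport {U V : Heis n → (Fin n → ℝ) × (Fin n → ℝ)} (hU : Continuous U)
    (hV : ∀ ξ ∈ tsupport U, ContinuousAt V ξ) : Continuous fun ξ => hDot (U ξ) (V ξ) := by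
  refine continuous_of_tsupport fun ξ hξ => ?_
  have := hV ξ (closure_mono (support_hDot_subset U V) hξ)
  unfold hDot
  fun_prop

end HorizontalCalculus

section IntegrationByParts

instance isAddHaarMeasure_volume_heis : (volume : Measure (Heis n)).IsAddHaarMeasure :=
  have : (volume : Measure ((Fin n → ℝ) × ℝ)).IsAddHaarMeasure :=
    Measure.prod.instIsAddHaarMeasure volume volume
  Measure.prod.instIsAddHaarMeasure volume volume

lemma integrable_fderiv_apply {E : Type*} [NormedAddCommGroup E] [NormedSpace ℝ E]
    [MeasurableSpace E] [BorelSpace E] {μ : Measure E} [IsFiniteMeasureOnCompacts μ]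
    {w : E → ℝ} (hw : ContDiff ℝ 1 w) (hc : HasCompactSupport w) (v : E) :
    Integrable (fun ξ => fderiv ℝ w ξ v) μ :=
  ((hw.continuous_fderiv one_ne_zero).clm_apply
    continuous_const).integrable_of_hasCompactSupport (hc.fderiv_apply ℝ v)

lemma integral_fderiv_apply_eq_zero {E : Type*} [NormedAddCommGroup E] [NormedSpace ℝ E]
    [FiniteDimensional ℝ E] [MeasurableSpace E] [BorelSpace E] {μ : Measure E}
    [μ.IsAddHaarMeasure] {w : E → ℝ} (hw : ContDiff ℝ 1 w) (hc : HasCompactSupport w) (v : E) :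
    ∫ ξ, fderiv ℝ w ξ v ∂μ = 0 := by
  simpa using integral_mul_fderiv_eq_neg_fderiv_mul_of_integrable (μ := μ) (v := v)
    (f := fun _ => (1 : ℝ)) (g := w) (by simp) (by simpa using integrable_fderiv_apply hw hc v)
    (by simpa using hw.continuous.integrable_of_hasCompactSupport hc)
    (fun _ _ => by fun_prop) (fun ξ _ => hw.differentiable one_ne_zero ξ)

lemma integral_fderiv_add_mul_fderiv_eq_zero {E : Type*} [NormedAddCommGroup E] [NormedSpace ℝ E]
    [FiniteDimensional ℝ E] [MeasurableSpace E] [BorelSpace E] {μ : Measure E}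
    [μ.IsAddHaarMeasure] {w : E → ℝ} (hw : ContDiff ℝ 1 w) (hc : HasCompactSupport w)
    (v e : E) {l : E →L[ℝ] ℝ} (hl : l e = 0) :
    ∫ ξ, (fderiv ℝ w ξ v + l ξ * fderiv ℝ w ξ e) ∂μ = 0 := by
  have hlw : ContDiff ℝ 1 fun ξ => l ξ * w ξ := l.contDiff.mul hw
  have hlc : HasCompactSupport fun ξ => l ξ * w ξ := hc.mul_left
  have h_deriv (ξ : E) : l ξ * fderiv ℝ w ξ e = fderiv ℝ (fun η => l η * w η) ξ e := by
    rw [fderiv_fun_mul l.differentiableAt (hw.differentiable one_ne_zero ξ)]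
    simp [hl]
  simp only [h_deriv]
  rw [integral_add (integrable_fderiv_apply hw hc v) (integrable_fderiv_apply hlw hlc e),
    integral_fderiv_apply_eq_zero hw hc, integral_fderiv_apply_eq_zero hlw hlc, add_zero]

lemma integral_XH_eq_zero {w : Heis n → ℝ} (hw : ContDiff ℝ 1 w) (hc : HasCompactSupport w)
    (j : Fin n) : ∫ ξ, XH j w ξ = 0 :=
  integral_fderiv_add_mul_fderiv_eq_zero hw hc _ (0, 0, 1) (l := (2 : ℝ) • yCoord j) (by simp)

lemma integral_YH_eq_zero {w : Heis n → ℝ} (hw : ContDiff ℝ 1 w) (hc : HasCompactSupport w)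
    (j : Fin n) : ∫ ξ, YH j w ξ = 0 := by
  simpa [YH, sub_eq_add_neg] using integral_fderiv_add_mul_fderiv_eq_zero (μ := volume) hw hc
    (0, Pi.single j 1, 0) (0, 0, 1) (l := (-2 : ℝ) • xCoord j) (by simp)

lemma integrable_XH {w : Heis n → ℝ} (hw : ContDiff ℝ 1 w) (hc : HasCompactSupport w)
    (j : Fin n) : Integrable fun ξ => XH j w ξ :=
  Continuous.integrable_of_hasCompactSupport (f := fun ξ => (hGrad w ξ).1 j)
    ((continuous_apply j).comp (continuous_hGrad hw).fst)
    (hasCompactSupport_fst_apply (hasCompactSupport_hGrad hc) j)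

lemma integrable_YH {w : Heis n → ℝ} (hw : ContDiff ℝ 1 w) (hc : HasCompactSupport w)
    (j : Fin n) : Integrable fun ξ => YH j w ξ :=
  Continuous.integrable_of_hasCompactSupport (f := fun ξ => (hGrad w ξ).2 j)
    ((continuous_apply j).comp (continuous_hGrad hw).snd)
    (hasCompactSupport_snd_apply (hasCompactSupport_hGrad hc) j)

section Divergence

variable {V : Heis n → (Fin n → ℝ) × (Fin n → ℝ)} (hV : ContDiff ℝ 1 V) (hc : HasCompactSupport V)
include hV hc

lemma integrable_XH_fst_add_YH_snd (j : Fin n) :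
    Integrable fun ξ => XH j (fun η => (V η).1 j) ξ + YH j (fun η => (V η).2 j) ξ :=
  (integrable_XH (by fun_prop) (hasCompactSupport_fst_apply hc j) j).add
    (integrable_YH (by fun_prop) (hasCompactSupport_snd_apply hc j) j)

lemma integrable_hDiv : Integrable (hDiv V) :=
  integrable_finsetSum _ fun j _ => integrable_XH_fst_add_YH_snd hV hc j

theorem integral_hDiv_eq_zero : ∫ ξ, hDiv V ξ = 0 := by
  have hc₁ := hasCompactSupport_fst_apply hc
  have hc₂ := hasCompactSupport_snd_apply hc
  simp only [hDiv]
  rw [integral_finsetSum _ fun j _ => integrable_XH_fst_add_YH_snd hV hc j]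
  refine Finset.sum_eq_zero fun j _ => ?_
  rw [integral_add (integrable_XH (by fun_prop) (hc₁ j) j) (integrable_YH (by fun_prop) (hc₂ j) j),
    integral_XH_eq_zero (by fun_prop) (hc₁ j), integral_YH_eq_zero (by fun_prop) (hc₂ j), add_zero]

end Divergence

lemma contDiff_smul_of_tsupport {E F : Type*} [NormedAddCommGroup E] [NormedSpace ℝ E]
    [NormedAddCommGroup F] [NormedSpace ℝ F] {k : WithTop ℕ∞} {u : E → ℝ} {V : E → F}
    (hu : ContDiff ℝ k u) (hV : ∀ ξ ∈ tsupport u, ContDiffAt ℝ k V ξ) :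
    ContDiff ℝ k fun ξ => u ξ • V ξ := by
  rw [← contMDiff_iff_contDiff]
  refine contMDiff_of_tsupport fun ξ hξ => ContDiffAt.contMDiffAt ?_
  exact hu.contDiffAt.smul (hV ξ (tsupport_smul_subset_left u V hξ))

theorem integral_mul_hDiv {u : Heis n → ℝ} {V : Heis n → (Fin n → ℝ) × (Fin n → ℝ)}
    (hu : ContDiff ℝ 1 u) (hc : HasCompactSupport u)
    (hV : ∀ ξ ∈ tsupport u, ContDiffAt ℝ 1 V ξ) :
    ∫ ξ, u ξ * hDiv V ξ = -∫ ξ, hDot (hGrad u ξ) (V ξ) := by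
  have huV := contDiff_smul_of_tsupport hu hV
  have hcV : HasCompactSupport fun ξ => u ξ • V ξ := hc.smul_right
  have h_leibniz (ξ : Heis n) :
      u ξ * hDiv V ξ = hDiv (fun η => u η • V η) ξ - hDot (hGrad u ξ) (V ξ) := by
    by_cases hξ : ξ ∈ tsupport u
    · rw [hDiv_smul (hu.differentiable one_ne_zero ξ) ((hV ξ hξ).differentiableAt one_ne_zero),
        add_sub_cancel_right]
    · have hξV : ξ ∉ tsupport fun η => u η • V η := fun h => hξ (tsupport_smul_subset_left u V h)
      have h_grad : hGrad u ξ = 0 :=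
        image_eq_zero_of_notMem_tsupport fun h => hξ (tsupport_hGrad_subset u h)
      rw [hDiv_eq_zero_of_notMem_tsupport hξV, h_grad, hDot_zero_left,
        image_eq_zero_of_notMem_tsupport hξ, zero_mul, sub_zero]
  have h_int : Integrable fun ξ => hDot (hGrad u ξ) (V ξ) :=
    (continuous_hDot_of_tsupport (continuous_hGrad hu) fun ξ hξ =>
      (hV ξ (tsupport_hGrad_subset u hξ)).continuousAt).integrable_of_hasCompactSupport
        ((hasCompactSupport_hGrad hc).mono (support_hDot_subset _ _))
  simp only [h_leibniz]
  rw [integral_sub (integrable_hDiv huV hcV) h_int, integral_hDiv_eq_zero huV hcV, zero_sub]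

end IntegrationByParts

section Gauge

lemma zNorm_nonneg (ξ : Heis n) : 0 ≤ zNorm ξ := Real.sqrt_nonneg _

lemma dH_nonneg (ξ : Heis n) : 0 ≤ dH ξ := by
  unfold dH
  positivity

lemma zNorm_sq (ξ : Heis n) : zNorm ξ ^ 2 = ∑ j, ξ.1 j ^ 2 + ∑ j, ξ.2.1 j ^ 2 :=
  Real.sq_sqrt (by positivity)

lemma dH_pow_four (ξ : Heis n) : dH ξ ^ 4 = (zNorm ξ ^ 2) ^ 2 + ξ.2.2 ^ 2 := by
  rw [dH, ← rpow_mul_natCast (by positivity), zNorm_sq]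
  norm_num

lemma dH_pos {ξ : Heis n} (hξ : ξ ≠ 0) : 0 < dH ξ := by
  refine (dH_nonneg ξ).lt_of_ne' fun hd => hξ ?_
  have h4 := dH_pow_four ξ
  rw [hd, zero_pow four_ne_zero] at h4
  obtain ⟨hz, ht⟩ := (add_eq_zero_iff_of_nonneg (by positivity) (by positivity)).1 h4.symm
  rw [sq_eq_zero_iff, zNorm_sq, add_eq_zero_iff_of_nonneg (by positivity) (by positivity),
    Finset.sum_eq_zero_iff_of_nonneg fun _ _ => sq_nonneg _,
    Finset.sum_eq_zero_iff_of_nonneg fun _ _ => sq_nonneg _] at hz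
  ext j
  · simpa using hz.1 j (Finset.mem_univ j)
  · simpa using hz.2 j (Finset.mem_univ j)
  · simpa using ht

lemma continuous_zNorm : Continuous (zNorm (n := n)) := by
  unfold zNorm
  fun_prop

lemma continuous_dH : Continuous (dH (n := n)) := by
  unfold dH
  exact Continuous.rpow_const (by fun_prop) fun _ => Or.inr (by norm_num)

lemma contDiff_zNorm_sq {k : WithTop ℕ∞} : ContDiff ℝ k fun ξ : Heis n => zNorm ξ ^ 2 := by
  simp only [zNorm_sq]
  fun_prop

lemma rpow_eq_pow_rpow_div {r : ℝ} (hr : 0 ≤ r) (s : ℝ) {m : ℕ} (hm : m ≠ 0) :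
    r ^ s = (r ^ m) ^ (s / m) := by
  rw [← rpow_natCast_mul hr, mul_div_cancel₀ s (Nat.cast_ne_zero.2 hm)]

lemma dH_rpow_eq_dH_pow_four_rpow (δ : ℝ) (ξ : Heis n) : dH ξ ^ δ = (dH ξ ^ 4) ^ (δ / 4) :=
  mod_cast rpow_eq_pow_rpow_div (dH_nonneg ξ) δ four_ne_zero

lemma contDiffAt_dH_rpow {k : WithTop ℕ∞} (δ : ℝ) {ξ : Heis n} (hξ : ξ ≠ 0) :
    ContDiffAt ℝ k (fun η => dH η ^ δ) ξ := by
  have h4 : 0 < dH ξ ^ 4 := pow_pos (dH_pos hξ) 4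
  simp only [dH_rpow_eq_dH_pow_four_rpow δ, dH_pow_four]
  have := (contDiff_zNorm_sq (n := n) (k := k)).contDiffAt (x := ξ)
  exact ContDiffAt.rpow_const_of_ne (by fun_prop) (dH_pow_four ξ ▸ h4.ne')

/-- The horizontal component `z = (x, y)` of a point, as a horizontal vector field. -/
def zField (ξ : Heis n) : (Fin n → ℝ) × (Fin n → ℝ) := (ξ.1, ξ.2.1)

/-- The rotated horizontal component `(y, -x)`, as a horizontal vector field: it is half the
horizontal gradient of the coordinate `t`. -/
def zRotField (ξ : Heis n) : (Fin n → ℝ) × (Fin n → ℝ) := (ξ.2.1, -ξ.1)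

/-- The polynomial horizontal vector field `d³ ∇_H d = ¼ ∇_H d⁴`. -/
def gaugeField (ξ : Heis n) : (Fin n → ℝ) × (Fin n → ℝ) :=
  zNorm ξ ^ 2 • zField ξ + ξ.2.2 • zRotField ξ

lemma contDiff_zField {k : WithTop ℕ∞} : ContDiff ℝ k (zField (n := n)) := by
  unfold zField
  fun_prop

lemma contDiff_zRotField {k : WithTop ℕ∞} : ContDiff ℝ k (zRotField (n := n)) := by
  unfold zRotField
  fun_prop

lemma contDiff_gaugeField {k : WithTop ℕ∞} : ContDiff ℝ k (gaugeField (n := n)) := by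
  have := contDiff_zNorm_sq (n := n) (k := k)
  have := contDiff_zField (n := n) (k := k)
  have := contDiff_zRotField (n := n) (k := k)
  unfold gaugeField
  fun_prop

lemma hDot_zField_zField (ξ : Heis n) : hDot (zField ξ) (zField ξ) = zNorm ξ ^ 2 := by
  rw [zNorm_sq]
  simp only [hDot, zField, sq]

lemma hDot_zRotField_zRotField (ξ : Heis n) :
    hDot (zRotField ξ) (zRotField ξ) = zNorm ξ ^ 2 := by
  rw [zNorm_sq, add_comm]
  simp only [hDot, zRotField, sq, Pi.neg_apply, neg_mul_neg]

lemma hDot_zField_zRotField (ξ : Heis n) : hDot (zField ξ) (zRotField ξ) = 0 := by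
  simp [hDot, zField, zRotField, mul_comm]

lemma hDot_zField_gaugeField (ξ : Heis n) : hDot (zField ξ) (gaugeField ξ) = zNorm ξ ^ 4 := by
  rw [gaugeField, hDot_add_right, hDot_smul_right, hDot_smul_right, hDot_zField_zField,
    hDot_zField_zRotField]
  ring

lemma hDot_gaugeField_gaugeField (ξ : Heis n) :
    hDot (gaugeField ξ) (gaugeField ξ) = zNorm ξ ^ 2 * dH ξ ^ 4 := by
  conv_lhs => arg 1; rw [gaugeField]
  rw [hDot_add_left, hDot_smul_left, hDot_smul_left, hDot_zField_gaugeField, gaugeField,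
    hDot_add_right, hDot_smul_right, hDot_smul_right, hDot_zRotField_zRotField,
    hDot_comm (zRotField ξ), hDot_zField_zRotField, dH_pow_four]
  ring

lemma hNorm_gaugeField (ξ : Heis n) : hNorm (gaugeField ξ) = zNorm ξ * dH ξ ^ 2 := by
  have hz := zNorm_nonneg ξ
  rw [hNorm_eq_sqrt_hDot, hDot_gaugeField_gaugeField,
    show zNorm ξ ^ 2 * dH ξ ^ 4 = (zNorm ξ * dH ξ ^ 2) ^ 2 by ring, Real.sqrt_sq (by positivity)]

lemma abs_hDot_gaugeField_le (v : (Fin n → ℝ) × (Fin n → ℝ)) (ξ : Heis n) :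
    |hDot v (gaugeField ξ)| ≤ hNorm v * (zNorm ξ * dH ξ ^ 2) :=
  (abs_hDot_le v _).trans_eq (by rw [hNorm_gaugeField])

lemma hGrad_snd_snd (ξ : Heis n) : hGrad (fun η => η.2.2) ξ = (2 : ℝ) • zRotField ξ := by
  rw [hGrad_eq_of_hasFDerivAt (hasFDerivAt_snd.snd)]
  ext <;> simp [zRotField]

lemma hGrad_zNorm_sq (ξ : Heis n) : hGrad (fun η => zNorm η ^ 2) ξ = (2 : ℝ) • zField ξ := by
  have h := (HasFDerivAt.fun_sum (u := Finset.univ) fun j _ =>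
    (hasFDerivAt_fst_apply j ξ).pow 2).fun_add
      (HasFDerivAt.fun_sum (u := Finset.univ) fun j _ => (hasFDerivAt_snd_fst_apply j ξ).pow 2)
  simp only [zNorm_sq]
  rw [hGrad_eq_of_hasFDerivAt h]
  ext <;> simp [zField, Pi.single_apply]

lemma hGrad_dH_pow_four (ξ : Heis n) : hGrad (fun η => dH η ^ 4) ξ = (4 : ℝ) • gaugeField ξ := by
  have hz := contDiff_zNorm_sq.differentiable one_ne_zero ξ
  have hzz := hGrad_comp (g := fun η => zNorm η ^ 2) (hasDerivAt_pow 2 _) hz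
  have htt := hGrad_comp (g := fun η => η.2.2) (ξ := ξ) (hasDerivAt_pow 2 _) (by fun_prop)
  simp only [dH_pow_four]
  rw [hGrad_add (by fun_prop) (by fun_prop), hzz, htt, hGrad_zNorm_sq, hGrad_snd_snd, gaugeField]
  module

lemma hGrad_dH_rpow (δ : ℝ) {ξ : Heis n} (hξ : ξ ≠ 0) :
    hGrad (fun η => dH η ^ δ) ξ = (δ * dH ξ ^ (δ - 4)) • gaugeField ξ := by
  have hd := dH_pos hξ
  have h4 : DifferentiableAt ℝ (fun η : Heis n => dH η ^ 4) ξ := by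
    have := contDiff_zNorm_sq.differentiable one_ne_zero ξ
    simp only [dH_pow_four]
    fun_prop
  simp only [dH_rpow_eq_dH_pow_four_rpow δ]
  rw [hGrad_comp (Real.hasDerivAt_rpow_const (Or.inl (pow_pos hd 4).ne')) h4, hGrad_dH_pow_four,
    smul_smul, ← rpow_natCast_mul hd.le]
  congr 1
  rw [show ((4 : ℕ) : ℝ) * (δ / 4 - 1) = δ - 4 by push_cast; ring]
  ring

lemma hDiv_zField (ξ : Heis n) : hDiv zField ξ = 2 * n := by
  simp [hDiv, XH, YH, zField, (hasFDerivAt_fst_apply _ _).fderiv,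
    (hasFDerivAt_snd_fst_apply _ _).fderiv, ← two_mul, mul_comm]

lemma hDiv_zRotField (ξ : Heis n) : hDiv zRotField ξ = 0 := by
  simp [hDiv, XH, YH, zRotField, (hasFDerivAt_fst_apply _ _).fderiv,
    (hasFDerivAt_snd_fst_apply _ _).fderiv]

lemma hDiv_gaugeField (ξ : Heis n) : hDiv gaugeField ξ = (2 * n + 4) * zNorm ξ ^ 2 := by
  have hz := contDiff_zNorm_sq.differentiable one_ne_zero ξ
  have hV := contDiff_zField.differentiable one_ne_zero ξ
  have hR := contDiff_zRotField.differentiable one_ne_zero ξ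
  have h_add : hDiv gaugeField ξ = hDiv (fun η => zNorm η ^ 2 • zField η) ξ +
    hDiv (fun η => η.2.2 • zRotField η) ξ := hDiv_add (by fun_prop) (by fun_prop)
  rw [h_add, hDiv_smul hz hV, hDiv_smul (by fun_prop) hR, hGrad_zNorm_sq, hGrad_snd_snd,
    hDiv_zField, hDiv_zRotField, hDot_smul_left, hDot_smul_left, hDot_zField_zField,
    hDot_zRotField_zRotField]
  ring

end Gauge

section Regularization

lemma hGrad_zNorm_sq_add_rpow {ε : ℝ} (hε : 0 < ε) (α : ℝ) (ξ : Heis n) :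
    hGrad (fun η => (zNorm η ^ 2 + ε) ^ α) ξ =
      (2 * α * (zNorm ξ ^ 2 + ε) ^ (α - 1)) • zField ξ := by
  have hs : zNorm ξ ^ 2 + ε ≠ 0 := by positivity
  have h_outer : HasDerivAt (fun s => (s + ε) ^ α) (1 * α * (zNorm ξ ^ 2 + ε) ^ (α - 1))
      (zNorm ξ ^ 2) := ((hasDerivAt_id _).add_const ε).rpow_const (Or.inl hs)
  rw [hGrad_comp (g := fun η => zNorm η ^ 2) h_outer
    (contDiff_zNorm_sq.differentiable one_ne_zero ξ), hGrad_zNorm_sq]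
  module

/-- The field `|z|^γ d^δ · d³ ∇_H d` with `|z|²` replaced by `|z|² + ε`, which makes it smooth away
from the origin for every real `γ`. -/
def regGaugeField (ε γ δ : ℝ) (ξ : Heis n) : (Fin n → ℝ) × (Fin n → ℝ) :=
  ((zNorm ξ ^ 2 + ε) ^ (γ / 2) * dH ξ ^ δ) • gaugeField ξ

lemma contDiff_zNorm_sq_add_rpow {k : WithTop ℕ∞} {ε : ℝ} (hε : 0 < ε) (α : ℝ) :
    ContDiff ℝ k fun ξ : Heis n => (zNorm ξ ^ 2 + ε) ^ α :=
  (contDiff_zNorm_sq.add contDiff_const).rpow_const_of_ne fun _ => by positivity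

lemma contDiffAt_regGaugeField {k : WithTop ℕ∞} {ε : ℝ} (hε : 0 < ε) (γ δ : ℝ) {ξ : Heis n}
    (hξ : ξ ≠ 0) : ContDiffAt ℝ k (regGaugeField ε γ δ) ξ :=
  ((contDiff_zNorm_sq_add_rpow hε _).contDiffAt.mul (contDiffAt_dH_rpow δ hξ)).smul
    contDiff_gaugeField.contDiffAt

lemma hDiv_regGaugeField {ε : ℝ} (hε : 0 < ε) (γ δ : ℝ) {ξ : Heis n} (hξ : ξ ≠ 0) :
    hDiv (regGaugeField ε γ δ) ξ =
      γ * ((zNorm ξ ^ 2 + ε) ^ ((γ - 2) / 2) * (zNorm ξ ^ 4 * dH ξ ^ δ)) +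
        (2 * n + 4 + δ) * ((zNorm ξ ^ 2 + ε) ^ (γ / 2) * (zNorm ξ ^ 2 * dH ξ ^ δ)) := by
  have hz : DifferentiableAt ℝ (fun η : Heis n => (zNorm η ^ 2 + ε) ^ (γ / 2)) ξ :=
    (contDiff_zNorm_sq_add_rpow hε _).differentiable one_ne_zero ξ
  have hd := (contDiffAt_dH_rpow δ hξ).differentiableAt one_ne_zero
  have h_div : hDiv (regGaugeField ε γ δ) ξ = _ :=
    hDiv_smul (hz.fun_mul hd) (contDiff_gaugeField.differentiable one_ne_zero ξ)
  have hd4 : dH ξ ^ (δ - 4) * dH ξ ^ 4 = dH ξ ^ δ := by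
    rw [← rpow_add_natCast (dH_pos hξ).ne']
    norm_num
  rw [h_div, hDiv_gaugeField, hGrad_mul hz hd, hGrad_zNorm_sq_add_rpow hε, hGrad_dH_rpow δ hξ,
    hDot_add_left, hDot_smul_left, hDot_smul_left, hDot_smul_left, hDot_smul_left,
    hDot_gaugeField_gaugeField, hDot_zField_gaugeField, ← hd4,
    show γ / 2 - 1 = (γ - 2) / 2 by ring]
  ring

lemma sq_add_rpow_mul_pow_le {r ε α : ℝ} {k : ℕ} (hr : 0 ≤ r) (hε : 0 < ε) (hε₁ : ε ≤ 1)
    (hα : 0 ≤ α + k / 2) : (r ^ 2 + ε) ^ α * r ^ k ≤ (r ^ 2 + 1) ^ (α + k / 2) := by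
  have hs : 0 < r ^ 2 + ε := by positivity
  have hk : r ^ k ≤ (r ^ 2 + ε) ^ (k / 2 : ℝ) := by
    calc r ^ k = (r ^ 2) ^ (k / 2 : ℝ) := by
          exact_mod_cast rpow_eq_pow_rpow_div hr (k : ℝ) two_ne_zero
      _ ≤ (r ^ 2 + ε) ^ (k / 2 : ℝ) := by gcongr; linarith
  calc (r ^ 2 + ε) ^ α * r ^ k ≤ (r ^ 2 + ε) ^ α * (r ^ 2 + ε) ^ (k / 2 : ℝ) := by gcongr
    _ = (r ^ 2 + ε) ^ (α + k / 2) := (rpow_add hs _ _).symm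
    _ ≤ (r ^ 2 + 1) ^ (α + k / 2) := by gcongr

lemma tendsto_sq_add_rpow_mul {r g : ℝ} (hr : 0 ≤ r) (hg : r = 0 → g = 0) (γ : ℝ) :
    Tendsto (fun ε => (r ^ 2 + ε) ^ (γ / 2) * g) (𝓝[>] 0) (𝓝 (r ^ γ * g)) := by
  rcases hr.eq_or_lt with rfl | hr
  · simp [hg rfl]
  have h_sq : r ^ γ = (r ^ 2 + 0) ^ (γ / 2) := by
    rw [add_zero]
    exact_mod_cast rpow_eq_pow_rpow_div hr.le γ two_ne_zero
  rw [h_sq]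
  refine Tendsto.mul_const g (Tendsto.rpow_const ?_ (Or.inl (by positivity)))
  exact (tendsto_const_nhds.add tendsto_id).mono_left nhdsWithin_le_nhds

lemma norm_sq_add_rpow_mul_le {r g h γ ε : ℝ} {k : ℕ} (hr : 0 ≤ r) (hγ : 0 ≤ γ + k)
    (hgh : |g| ≤ |h| * r ^ k) (hε : 0 < ε) (hε₁ : ε ≤ 1) :
    ‖(r ^ 2 + ε) ^ (γ / 2) * g‖ ≤ |h| * (r ^ 2 + 1) ^ (γ / 2 + k / 2) := by
  have h_rpow := sq_add_rpow_mul_pow_le (k := k) (α := γ / 2) hr hε hε₁ (by linarith)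
  rw [norm_mul, Real.norm_of_nonneg (by positivity), Real.norm_eq_abs]
  calc (r ^ 2 + ε) ^ (γ / 2) * |g| ≤ (r ^ 2 + ε) ^ (γ / 2) * (|h| * r ^ k) := by gcongr
    _ = |h| * ((r ^ 2 + ε) ^ (γ / 2) * r ^ k) := by ring
    _ ≤ |h| * (r ^ 2 + 1) ^ (γ / 2 + k / 2) := by gcongr

lemma continuous_sq_add_rpow_mul {X : Type*} [TopologicalSpace X] {r G : X → ℝ} {ε : ℝ}
    (hr : Continuous r) (hG : Continuous G) (hε : 0 < ε) (α : ℝ) :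
    Continuous fun x => (r x ^ 2 + ε) ^ α * G x :=
  (Continuous.rpow_const (by fun_prop) fun x => Or.inl (by positivity)).mul hG

section Limit

variable {X : Type*} [TopologicalSpace X] [MeasurableSpace X] [OpensMeasurableSpace X]
  {μ : Measure X} [IsFiniteMeasureOnCompacts μ] {r G H : X → ℝ} {γ : ℝ} {k : ℕ}

variable (hr : Continuous r) (hG : Continuous G) (hH : Continuous H) (hHc : HasCompactSupport H)
  (hr₀ : ∀ x, 0 ≤ r x) (hk : k ≠ 0) (hγ : 0 ≤ γ + k) (hGH : ∀ x, |G x| ≤ |H x| * r x ^ k)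

include hr hH hHc in
lemma integrable_abs_mul_sq_add_one_rpow (α : ℝ) :
    Integrable (fun x => |H x| * (r x ^ 2 + 1) ^ α) μ :=
  (hH.abs.mul (Continuous.rpow_const (by fun_prop) fun x => Or.inl (by positivity))
    ).integrable_of_hasCompactSupport hHc.norm.mul_right

include hr hG hH hHc hr₀ hγ hGH in
lemma integrable_sq_add_rpow_mul {ε : ℝ} (hε : 0 < ε) (hε₁ : ε ≤ 1) :
    Integrable (fun x => (r x ^ 2 + ε) ^ (γ / 2) * G x) μ :=
  (integrable_abs_mul_sq_add_one_rpow hr hH hHc _).mono'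
    (continuous_sq_add_rpow_mul hr hG hε _).aestronglyMeasurable
    (.of_forall fun x => norm_sq_add_rpow_mul_le (hr₀ x) hγ (hGH x) hε hε₁)

include hr hG hH hHc hr₀ hk hγ hGH in
theorem tendsto_integral_sq_add_rpow_mul :
    Tendsto (fun ε => ∫ x, (r x ^ 2 + ε) ^ (γ / 2) * G x ∂μ) (𝓝[>] 0)
      (𝓝 (∫ x, r x ^ γ * G x ∂μ)) := by
  have hε : ∀ᶠ ε in 𝓝[>] (0 : ℝ), ε ∈ Set.Ioc (0 : ℝ) 1 := Ioc_mem_nhdsGT one_pos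
  refine tendsto_integral_filter_of_dominated_convergence
    (fun x => |H x| * (r x ^ 2 + 1) ^ (γ / 2 + k / 2)) ?_ ?_
    (integrable_abs_mul_sq_add_one_rpow hr hH hHc _) (.of_forall fun x => ?_)
  · filter_upwards [hε] with ε hε
    exact (continuous_sq_add_rpow_mul hr hG hε.1 _).aestronglyMeasurable
  · filter_upwards [hε] with ε hε
    exact .of_forall fun x => norm_sq_add_rpow_mul_le (hr₀ x) hγ (hGH x) hε.1 hε.2
  · refine tendsto_sq_add_rpow_mul (hr₀ x) (fun hx => ?_) γ
    simpa [hx, hk] using hGH x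

lemma abs_pow_mul_le {r : ℝ} (hr : 0 ≤ r) (w : ℝ) (k : ℕ) : |r ^ k * w| ≤ |w| * r ^ k := by
  rw [abs_mul, abs_of_nonneg (pow_nonneg hr k), mul_comm]

include hr hH hHc hr₀ hγ in
lemma integrable_sq_add_rpow_mul_pow_mul {ε : ℝ} (hε : 0 < ε) (hε₁ : ε ≤ 1) :
    Integrable (fun x => (r x ^ 2 + ε) ^ (γ / 2) * (r x ^ k * H x)) μ :=
  integrable_sq_add_rpow_mul hr ((hr.pow k).mul hH) hH hHc hr₀ hγ
    (fun x => abs_pow_mul_le (hr₀ x) (H x) k) hε hε₁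

include hr hH hHc hr₀ hk in
lemma tendsto_integral_sq_add_rpow_mul_pow_mul (hγk : 0 < γ + k) :
    Tendsto (fun ε => ∫ x, (r x ^ 2 + ε) ^ (γ / 2) * (r x ^ k * H x) ∂μ) (𝓝[>] 0)
      (𝓝 (∫ x, r x ^ (γ + k) * H x ∂μ)) := by
  have h_rpow (x : X) : r x ^ (γ + k) * H x = r x ^ γ * (r x ^ k * H x) := by
    rw [rpow_add_natCast' (hr₀ x) hγk.ne', mul_assoc]
  simp only [h_rpow]
  exact tendsto_integral_sq_add_rpow_mul hr ((hr.pow k).mul hH) hH hHc hr₀ hk hγk.le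
    fun x => abs_pow_mul_le (hr₀ x) (H x) k

end Limit

end Regularization


section Hardy

lemma continuous_of_continuousAt_ne_zero {X Y : Type*} [TopologicalSpace X] [Zero X]
    [TopologicalSpace Y] [Zero Y] {g : X → Y} (h₀ : 0 ∉ tsupport g)
    (hg : ∀ x ≠ 0, ContinuousAt g x) : Continuous g :=
  continuous_of_tsupport fun x hx => hg x (ne_of_mem_of_not_mem hx h₀)

lemma continuous_mul_dH_rpow {g : Heis n → ℝ} (hg : Continuous g) (h₀ : 0 ∉ tsupport g) (δ : ℝ) :
    Continuous fun ξ => g ξ * dH ξ ^ δ :=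
  continuous_of_continuousAt_ne_zero (fun h => h₀ (tsupport_mul_subset_left h)) fun _ hξ =>
    hg.continuousAt.mul (contDiffAt_dH_rpow (k := 1) δ hξ).continuousAt

variable {u : Heis n → ℝ} (hu : ContDiff ℝ 1 u) (hc : HasCompactSupport u)
  (h₀ : (0 : Heis n) ∉ tsupport u) {γ δ : ℝ}

include hu hc h₀ in
lemma integral_mul_hDiv_regGaugeField {ε : ℝ} (hε : 0 < ε) (γ δ : ℝ) :
    ∫ ξ, (γ * ((zNorm ξ ^ 2 + ε) ^ ((γ - 2) / 2) * (zNorm ξ ^ 4 * (u ξ * dH ξ ^ δ))) +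
        (2 * n + 4 + δ) * ((zNorm ξ ^ 2 + ε) ^ (γ / 2) * (zNorm ξ ^ 2 * (u ξ * dH ξ ^ δ)))) =
      -∫ ξ, (zNorm ξ ^ 2 + ε) ^ (γ / 2) * (hDot (hGrad u ξ) (gaugeField ξ) * dH ξ ^ δ) := by
  calc
    _ = ∫ ξ, u ξ * hDiv (regGaugeField ε γ δ) ξ := by
      refine integral_congr_ae (.of_forall fun ξ => ?_)
      by_cases hξ : ξ = 0
      · simp [hξ, image_eq_zero_of_notMem_tsupport h₀]
      · simp only [hDiv_regGaugeField hε γ δ hξ]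
        ring
    _ = -∫ ξ, hDot (hGrad u ξ) (regGaugeField ε γ δ ξ) :=
      integral_mul_hDiv hu hc fun _ hξ =>
        contDiffAt_regGaugeField hε γ δ (ne_of_mem_of_not_mem hξ h₀)
    _ = _ := by
      simp only [regGaugeField, hDot_smul_right, mul_assoc, mul_comm (dH _ ^ δ)]

include hu h₀ in
lemma continuous_hDot_hGrad_gaugeField_mul_dH_rpow (δ : ℝ) :
    Continuous fun ξ => hDot (hGrad u ξ) (gaugeField ξ) * dH ξ ^ δ := by
  refine continuous_mul_dH_rpow (g := fun ξ => hDot (hGrad u ξ) (gaugeField ξ)) ?_ ?_ δ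
  · exact continuous_hDot_of_tsupport (continuous_hGrad hu)
      fun ξ _ => (contDiff_gaugeField (k := 1)).continuous.continuousAt
  · exact fun h => h₀ (tsupport_hGrad_subset u (closure_mono (support_hDot_subset _ _) h))

include hu h₀ in
lemma continuous_hNorm_hGrad_mul_dH_rpow (δ : ℝ) :
    Continuous fun ξ => hNorm (hGrad u ξ) * dH ξ ^ δ :=
  continuous_mul_dH_rpow (g := fun ξ => hNorm (hGrad u ξ))
    (continuous_hNorm.comp (continuous_hGrad hu))
    (fun h => h₀ (tsupport_hNorm_hGrad_subset u h)) δ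

include hu hc h₀ in
lemma tendsto_integral_zNorm_sq_add_rpow_mul_hDot (hγ : -1 ≤ γ) :
    Tendsto (fun ε => ∫ ξ, (zNorm ξ ^ 2 + ε) ^ (γ / 2) *
        (hDot (hGrad u ξ) (gaugeField ξ) * dH ξ ^ δ)) (𝓝[>] 0)
      (𝓝 (∫ ξ, zNorm ξ ^ γ * (hDot (hGrad u ξ) (gaugeField ξ) * dH ξ ^ δ))) := by
  let H : Heis n → ℝ := fun ξ => dH ξ ^ 2 * (hNorm (hGrad u ξ) * dH ξ ^ δ)
  have hH : Continuous H := (continuous_dH.pow 2).mul (continuous_hNorm_hGrad_mul_dH_rpow hu h₀ δ)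
  have hHc : HasCompactSupport H := (hasCompactSupport_hNorm_hGrad hc).mul_right.mul_left
  have h_le (ξ : Heis n) : |hDot (hGrad u ξ) (gaugeField ξ) * dH ξ ^ δ| ≤ |H ξ| * zNorm ξ ^ 1 := by
    have hd := dH_nonneg ξ
    have hn := hNorm_nonneg (hGrad u ξ)
    have hH₀ : 0 ≤ H ξ := by dsimp only [H]; positivity
    rw [abs_mul, abs_of_nonneg (by positivity : 0 ≤ dH ξ ^ δ), abs_of_nonneg hH₀]
    calc |hDot (hGrad u ξ) (gaugeField ξ)| * dH ξ ^ δ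
        ≤ hNorm (hGrad u ξ) * (zNorm ξ * dH ξ ^ 2) * dH ξ ^ δ := by
          gcongr
          exact abs_hDot_gaugeField_le _ ξ
      _ = H ξ * zNorm ξ ^ 1 := by dsimp only [H]; ring
  exact tendsto_integral_sq_add_rpow_mul continuous_zNorm
    (continuous_hDot_hGrad_gaugeField_mul_dH_rpow hu h₀ δ) hH hHc zNorm_nonneg one_ne_zero
    (by push_cast; linarith) h_le

include hu hc h₀ in
theorem integral_zNorm_rpow_mul_dH_rpow (hγ : -1 ≤ γ) :
    (2 * n + 4 + γ + δ) * ∫ ξ, zNorm ξ ^ (γ + 2) * (u ξ * dH ξ ^ δ) =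
      -∫ ξ, zNorm ξ ^ γ * (hDot (hGrad u ξ) (gaugeField ξ) * dH ξ ^ δ) := by
  have hw := continuous_mul_dH_rpow hu.continuous h₀ δ
  have hwc : HasCompactSupport fun ξ => u ξ * dH ξ ^ δ := hc.mul_right
  have hγ₄ : 0 < γ - 2 + (4 : ℕ) := by push_cast; linarith
  have hγ₂ : 0 < γ + (2 : ℕ) := by push_cast; linarith
  have h_left₄ := tendsto_integral_sq_add_rpow_mul_pow_mul (μ := volume) continuous_zNorm hw hwc
    zNorm_nonneg four_ne_zero hγ₄
  have h_left₂ := tendsto_integral_sq_add_rpow_mul_pow_mul (μ := volume) continuous_zNorm hw hwc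
    zNorm_nonneg two_ne_zero hγ₂
  have h_right := tendsto_integral_zNorm_sq_add_rpow_mul_hDot hu hc h₀ (δ := δ) hγ
  have h_lim := tendsto_nhds_unique_of_eventuallyEq
    ((h_left₄.const_mul γ).add (h_left₂.const_mul (2 * n + 4 + δ))) h_right.neg (by
      filter_upwards [Ioc_mem_nhdsGT one_pos] with ε hε
      rw [← integral_mul_hDiv_regGaugeField hu hc h₀ hε.1 γ δ, integral_add, integral_const_mul,
        integral_const_mul]
      · exact (integrable_sq_add_rpow_mul_pow_mul continuous_zNorm hw hwc zNorm_nonneg hγ₄.le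
          hε.1 hε.2).const_mul γ
      · exact (integrable_sq_add_rpow_mul_pow_mul continuous_zNorm hw hwc zNorm_nonneg hγ₂.le
          hε.1 hε.2).const_mul _)
  rw [← h_lim, show γ - 2 + (4 : ℕ) = γ + 2 by push_cast; ring, Nat.cast_ofNat]
  ring

include hu hc h₀ in
theorem abs_integral_zNorm_rpow_mul_dH_rpow_le (hγ : -1 ≤ γ) :
    |(2 * n + 4 + γ + δ) * ∫ ξ, zNorm ξ ^ (γ + 2) * (u ξ * dH ξ ^ δ)| ≤
      ∫ ξ, zNorm ξ ^ (γ + 1) * (hNorm (hGrad u ξ) * dH ξ ^ (δ + 2)) := by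
  have h_int : Integrable fun ξ => zNorm ξ ^ (γ + 1) * (hNorm (hGrad u ξ) * dH ξ ^ (δ + 2)) :=
    ((continuous_zNorm.rpow_const fun _ => Or.inr (by linarith)).mul
      (continuous_hNorm_hGrad_mul_dH_rpow hu h₀ _)).integrable_of_hasCompactSupport
        (hasCompactSupport_hNorm_hGrad hc).mul_right.mul_left
  rw [integral_zNorm_rpow_mul_dH_rpow hu hc h₀ hγ, abs_neg, ← Real.norm_eq_abs]
  refine norm_integral_le_of_norm_le h_int (.of_forall fun ξ => ?_)
  have hz := zNorm_nonneg ξ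
  have hd := dH_nonneg ξ
  have hn := hNorm_nonneg (hGrad u ξ)
  calc ‖zNorm ξ ^ γ * (hDot (hGrad u ξ) (gaugeField ξ) * dH ξ ^ δ)‖
      = zNorm ξ ^ γ * (|hDot (hGrad u ξ) (gaugeField ξ)| * dH ξ ^ δ) := by
        rw [norm_mul, norm_mul, Real.norm_of_nonneg (by positivity), Real.norm_eq_abs,
          Real.norm_of_nonneg (by positivity : 0 ≤ dH ξ ^ δ)]
    _ ≤ zNorm ξ ^ γ * (hNorm (hGrad u ξ) * (zNorm ξ * dH ξ ^ 2) * dH ξ ^ δ) := by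
        gcongr
        exact abs_hDot_gaugeField_le _ ξ
    _ = zNorm ξ ^ γ * zNorm ξ ^ (1 : ℝ) *
          (hNorm (hGrad u ξ) * (dH ξ ^ δ * dH ξ ^ (2 : ℝ))) := by
        rw [rpow_one, rpow_two]
        ring
    _ ≤ zNorm ξ ^ (γ + 1) * (hNorm (hGrad u ξ) * dH ξ ^ (δ + 2)) := by
        gcongr
        · exact le_rpow_add hz _ _
        · exact le_rpow_add hd _ _

end Hardy

section Interpolation

lemma abs_abs_rpow_sub_two_mul {p : ℝ} (hp : 1 < p) (x : ℝ) :
    |(|x| ^ (p - 2) * x)| = |x| ^ (p - 1) := by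
  rw [abs_mul, abs_of_nonneg (by positivity), ← rpow_add_one' (abs_nonneg x) (by linarith)]
  congr 1
  ring

lemma tsupport_abs_rpow_subset {X : Type*} [TopologicalSpace X] {s : ℝ} (hs : s ≠ 0) (f : X → ℝ) :
    tsupport (fun x => |f x| ^ s) ⊆ tsupport f :=
  tsupport_comp_subset (g := fun x : ℝ => |x| ^ s) (by simp [zero_rpow hs]) f

lemma hNorm_hGrad_abs_rpow {p : ℝ} (hp : 1 < p) {f : Heis n → ℝ} {ξ : Heis n}
    (hf : DifferentiableAt ℝ f ξ) :
    hNorm (hGrad (fun η => |f η| ^ p) ξ) = p * (|f ξ| ^ (p - 1) * hNorm (hGrad f ξ)) := by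
  rw [hGrad_comp (hasDerivAt_abs_rpow (f ξ) hp) hf, hNorm_smul, mul_assoc, abs_mul,
    abs_abs_rpow_sub_two_mul hp, abs_of_pos (by linarith), mul_assoc]

-- `rpow_add` fails at the origin, where `d = 0`; a coefficient vanishing there repairs it.
lemma mul_dH_rpow_add {c : ℝ} {ξ : Heis n} (hc : ξ = 0 → c = 0) (α β : ℝ) :
    c * dH ξ ^ (α + β) = c * (dH ξ ^ α * dH ξ ^ β) := by
  by_cases hξ : ξ = 0
  · simp [hc hξ]
  · rw [rpow_add (dH_pos hξ)]

variable {p : ℝ} {f : Heis n → ℝ} (hf : ContDiff ℝ 1 f) (hc : HasCompactSupport f)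
  (h₀ : (0 : Heis n) ∉ tsupport f)

include hf hc h₀ in
theorem abs_mul_integral_zNorm_rpow_mul_abs_rpow_le (hp : 1 < p) (δ : ℝ) :
    |2 * n + 2 + p + δ| * ∫ ξ, zNorm ξ ^ p * (|f ξ| ^ p * dH ξ ^ δ) ≤
      p * ∫ ξ, zNorm ξ ^ (p - 1) * (|f ξ| ^ (p - 1) * hNorm (hGrad f ξ) * dH ξ ^ (δ + 2)) := by
  have hp₀ : p ≠ 0 := by linarith
  have hu : ContDiff ℝ 1 fun ξ => |f ξ| ^ p := by simpa using hf.norm_rpow hp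
  have huc : HasCompactSupport fun ξ => |f ξ| ^ p :=
    hc.of_isClosed_subset (isClosed_tsupport _) (tsupport_abs_rpow_subset hp₀ f)
  have hI : 0 ≤ ∫ ξ, zNorm ξ ^ p * (|f ξ| ^ p * dH ξ ^ δ) := integral_nonneg fun ξ => by
    have := zNorm_nonneg ξ
    have := dH_nonneg ξ
    positivity
  calc |2 * n + 2 + p + δ| * ∫ ξ, zNorm ξ ^ p * (|f ξ| ^ p * dH ξ ^ δ)
      = |(2 * n + 4 + (p - 2) + δ) *
          ∫ ξ, zNorm ξ ^ (p - 2 + 2) * (|f ξ| ^ p * dH ξ ^ δ)| := by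
        rw [sub_add_cancel, abs_mul, abs_of_nonneg hI]
        congr 2
        ring
    _ ≤ ∫ ξ, zNorm ξ ^ (p - 2 + 1) *
          (hNorm (hGrad (fun η => |f η| ^ p) ξ) * dH ξ ^ (δ + 2)) :=
        abs_integral_zNorm_rpow_mul_dH_rpow_le hu huc
          (fun h => h₀ (tsupport_abs_rpow_subset hp₀ f h)) (by linarith)
    _ = p * ∫ ξ, zNorm ξ ^ (p - 1) *
          (|f ξ| ^ (p - 1) * hNorm (hGrad f ξ) * dH ξ ^ (δ + 2)) := by
        rw [← integral_const_mul, show p - 2 + 1 = p - 1 by ring]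
        refine integral_congr_ae (.of_forall fun ξ => ?_)
        simp only [hNorm_hGrad_abs_rpow hp (hf.differentiable one_ne_zero ξ)]
        ring

include hf hc h₀ in
lemma memLp_hNorm_hGrad_mul_dH_rpow (α : ℝ) (r : ENNReal) :
    MemLp (fun ξ => hNorm (hGrad f ξ) * dH ξ ^ α) r :=
  (continuous_hNorm_hGrad_mul_dH_rpow hf h₀ α).memLp_of_hasCompactSupport
    (hasCompactSupport_hNorm_hGrad hc).mul_right

include hc h₀ in
lemma memLp_zNorm_rpow_mul_abs_rpow_mul_dH_rpow (hf : Continuous f) {s : ℝ} (hs : 0 < s) (α : ℝ)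
    (r : ENNReal) : MemLp (fun ξ => zNorm ξ ^ s * (|f ξ| ^ s * dH ξ ^ α)) r := by
  have hfs : Continuous fun ξ => |f ξ| ^ s := hf.abs.rpow_const fun _ => Or.inr hs.le
  have hsub := tsupport_abs_rpow_subset hs.ne' f
  have hcs : HasCompactSupport fun ξ => |f ξ| ^ s :=
    hc.of_isClosed_subset (isClosed_tsupport _) hsub
  exact ((continuous_zNorm.rpow_const fun _ => Or.inr hs.le).mul
    (continuous_mul_dH_rpow hfs (fun h => h₀ (hsub h)) α)).memLp_of_hasCompactSupport
      hcs.mul_right.mul_left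

variable {q : ℝ} (hpq : p.HolderConjugate q)

include hf hc h₀ hpq in
lemma integral_hNorm_hGrad_mul_le (a α : ℝ) :
    ∫ ξ, hNorm (hGrad f ξ) * dH ξ ^ (-a) * (zNorm ξ ^ (p - 1) * (|f ξ| ^ (p - 1) * dH ξ ^ α)) ≤
      (∫ ξ, hNorm (hGrad f ξ) ^ p / dH ξ ^ (a * p)) ^ (1 / p) *
        (∫ ξ, zNorm ξ ^ p * (|f ξ| ^ p * dH ξ ^ (α * q))) ^ (1 / q) := by
  have hz := zNorm_nonneg (n := n)
  have hd := dH_nonneg (n := n)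
  have hN (ξ : Heis n) := hNorm_nonneg (hGrad f ξ)
  have h_holder := integral_mul_le_Lp_mul_Lq_of_nonneg hpq
    (.of_forall fun ξ => mul_nonneg (hN ξ) (rpow_nonneg (hd ξ) _))
    (.of_forall fun ξ => mul_nonneg (rpow_nonneg (hz ξ) _)
      (mul_nonneg (rpow_nonneg (abs_nonneg (f ξ)) _) (rpow_nonneg (hd ξ) _)))
    (memLp_hNorm_hGrad_mul_dH_rpow hf hc h₀ (-a) (.ofReal p))
    (memLp_zNorm_rpow_mul_abs_rpow_mul_dH_rpow hc h₀ hf.continuous hpq.sub_one_pos α _)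
  have h_left (ξ : Heis n) : (hNorm (hGrad f ξ) * dH ξ ^ (-a)) ^ p =
      hNorm (hGrad f ξ) ^ p / dH ξ ^ (a * p) := by
    rw [mul_rpow (hN ξ) (rpow_nonneg (hd ξ) _), ← rpow_mul (hd ξ), neg_mul, rpow_neg (hd ξ),
      div_eq_mul_inv]
  have h_right (ξ : Heis n) : (zNorm ξ ^ (p - 1) * (|f ξ| ^ (p - 1) * dH ξ ^ α)) ^ q =
      zNorm ξ ^ p * (|f ξ| ^ p * dH ξ ^ (α * q)) := by
    have := hz ξ
    have := hd ξ
    rw [mul_rpow (by positivity) (by positivity), mul_rpow (by positivity) (by positivity),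
      ← rpow_mul (hz ξ), ← rpow_mul (abs_nonneg _), ← rpow_mul (hd ξ), hpq.sub_one_mul_conj]
  simpa only [h_left, h_right] using h_holder

include h₀ in
lemma zNorm_rpow_mul_abs_rpow_mul_dH_rpow_neg_sub (hp : p ≠ 0) (β : ℝ) (ξ : Heis n) :
    zNorm ξ ^ p * (|f ξ| ^ p * dH ξ ^ (-p - β)) =
      zNorm ξ ^ p / dH ξ ^ p * (|f ξ| ^ p / dH ξ ^ β) := by
  have hf₀ (hξ : ξ = 0) : |f ξ| ^ p = 0 := by
    simp [hξ, image_eq_zero_of_notMem_tsupport h₀, zero_rpow hp]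
  rw [sub_eq_add_neg, mul_dH_rpow_add hf₀, rpow_neg (dH_nonneg ξ), rpow_neg (dH_nonneg ξ)]
  ring

include h₀ in
lemma zNorm_rpow_mul_hNorm_hGrad_mul_dH_rpow_add (s α β : ℝ) (ξ : Heis n) :
    zNorm ξ ^ s * (|f ξ| ^ s * hNorm (hGrad f ξ) * dH ξ ^ (α + β)) =
      hNorm (hGrad f ξ) * dH ξ ^ α * (zNorm ξ ^ s * (|f ξ| ^ s * dH ξ ^ β)) := by
  have h_grad (hξ : ξ = 0) : |f ξ| ^ s * hNorm (hGrad f ξ) = 0 := by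
    rw [image_eq_zero_of_notMem_tsupport (f := fun η => hNorm (hGrad f η)) fun h =>
      h₀ (hξ ▸ tsupport_hNorm_hGrad_subset f h), mul_zero]
  rw [mul_dH_rpow_add h_grad]
  ring

end Interpolation

theorem hardy_interpolation_Heisenberg_general {p q : ℝ} (hpq : p.HolderConjugate q) (a b : ℝ)
    {f : Heis n → ℝ} (hf : ContDiff ℝ 1 f) (hc : HasCompactSupport f)
    (h₀ : (0 : Heis n) ∉ tsupport f) :
    |(2 * n + 2 - 1 - (a + b)) / p| *
        ∫ ξ : Heis n, zNorm ξ ^ p / dH ξ ^ p * (|f ξ| ^ p / dH ξ ^ (a + b + 1)) ≤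
      (∫ ξ : Heis n, hNorm (hGrad f ξ) ^ p / dH ξ ^ (a * p)) ^ (1 / p) *
        (∫ ξ : Heis n, zNorm ξ ^ p / dH ξ ^ p * (|f ξ| ^ p / dH ξ ^ (b * q))) ^ (1 / q) := by
  have h_weight := zNorm_rpow_mul_abs_rpow_mul_dH_rpow_neg_sub h₀ hpq.ne_zero
  have h_parts := abs_mul_integral_zNorm_rpow_mul_abs_rpow_le hf hc h₀ hpq.lt (-p - (a + b + 1))
  have h_holder := integral_hNorm_hGrad_mul_le hf hc h₀ hpq a (-(p - 1) - b)
  have h_exp₁ : -p - (a + b + 1) + 2 = -a + (-(p - 1) - b) := by ring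
  have h_exp₂ : (-(p - 1) - b) * q = -p - b * q := by
    rw [sub_mul, neg_mul, hpq.sub_one_mul_conj]
  simp only [h_exp₁, zNorm_rpow_mul_hNorm_hGrad_mul_dH_rpow_add h₀, h_weight] at h_parts
  simp only [h_exp₂, h_weight] at h_holder
  rw [abs_div, abs_of_pos hpq.pos, div_mul_eq_mul_div, div_le_iff₀' hpq.pos,
    show 2 * (n : ℝ) + 2 - 1 - (a + b) = 2 * n + 2 + p + (-p - (a + b + 1)) by ring]
  exact h_parts.trans (mul_le_mul_of_nonneg_left h_holder hpq.nonneg)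

/-- Theorem 2.1: sharp interpolation inequality of Hardy type on `ℍⁿ`. -/
theorem hardy_interpolation_Heisenberg
    (n : ℕ) (p q a b : ℝ) (hp : 1 < p) (hpQ : p < 2 * n + 2)
    (hQ : (2 * n + 2 : ℝ) ≠ 1 + (a + b)) (hpq : 1 / p + 1 / q = 1)
    (f : Heis n → ℝ) (hf : IsTestAwayZero f) :
    |(2 * n + 2 - 1 - (a + b)) / p| *
        ∫ ξ : Heis n, zNorm ξ ^ p / dH ξ ^ p * (|f ξ| ^ p / dH ξ ^ (a + b + 1)) ≤
      (∫ ξ : Heis n, hNorm (hGrad f ξ) ^ p / dH ξ ^ (a * p)) ^ (1 / p) *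
        (∫ ξ : Heis n, zNorm ξ ^ p / dH ξ ^ p * (|f ξ| ^ p / dH ξ ^ (b * q))) ^ (1 / q) :=
  hardy_interpolation_Heisenberg_general (Real.holderConjugate_iff.2 ⟨hp, by simpa using hpq⟩) a b
    (hf.1.of_le (by exact_mod_cast le_top)) hf.2.1 hf.2.2
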